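/- arXiv:1603.03505 — 5 statements merged into one kernel-verified Lean document; each statement's English description precedes it below -/
import Mathlib

section
/- For all real numbers ω ≥ 1, f > 1, m > 1, and x > 1: if f/ln f < ω/ln m, then (ω + f + 1)·(ln x / ln(f·m)) < (ω + 1)·(ln x / ln m). -/
/-!
Divide both costs by `ln x` and use `ln (f m) = ln f + ln m`. The cost of the `fM/B`-way mergesort
is then the mediant `(f + (ω + 1)) / (ln f + ln m)` of `f / ln f` and of the classic cost
`(ω + 1) / ln m`, and a mediant is smaller than one of its two fractions exactly when the other
fraction is.
-/

theorem add_div_add_lt_div_iff {K : Type*} [Semifield K] [LinearOrder K] [IsStrictOrderedRing K]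
    {a b c d : K} (hb : 0 < b) (hd : 0 < d) : (a + c) / (b + d) < c / d ↔ a / b < c / d := by
  rw [div_lt_div_iff₀ (add_pos hb hd) hd, div_lt_div_iff₀ hb hd, add_mul, mul_add,
    add_lt_add_iff_right]

theorem stmt2_general {ω f m x : ℝ} (hf : 1 < f) (hm : 1 < m) (hx : 1 < x) :
    (ω + f + 1) * (Real.log x / Real.log (f * m)) < (ω + 1) * (Real.log x / Real.log m) ↔
      f / Real.log f < (ω + 1) / Real.log m := by
  have hlog : Real.log (f * m) = Real.log f + Real.log m :=
    Real.log_mul (by positivity) (by positivity)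
  calc
    _ ↔ (f + (ω + 1)) / (Real.log f + Real.log m) * Real.log x <
        (ω + 1) / Real.log m * Real.log x := by
      rw [hlog, mul_comm_div, mul_comm_div, show ω + f + 1 = f + (ω + 1) by ring]
    _ ↔ (f + (ω + 1)) / (Real.log f + Real.log m) < (ω + 1) / Real.log m :=
      mul_lt_mul_iff_left₀ (Real.log_pos hx)
    _ ↔ f / Real.log f < (ω + 1) / Real.log m :=
      add_div_add_lt_div_iff (Real.log_pos hf) (Real.log_pos hm)

/-- If `f/ln f < ω/ln m` then the total I/O complexity of the fM/B-way mergesort,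
`(ω+f+1)·log_{fm} x`, is smaller than the classic mergesort's `(ω+1)·log_m x`. -/
theorem stmt2 (ω f m x : ℝ) (hω : 1 ≤ ω) (hf : 1 < f) (hm : 1 < m) (hx : 1 < x)
    (h : f / Real.log f < ω / Real.log m) :
    (ω + f + 1) * (Real.log x / Real.log (f * m)) <
      (ω + 1) * (Real.log x / Real.log m) :=
  (stmt2_general hf hm hx).2 <|
    h.trans (div_lt_div_of_pos_right (lt_add_one ω) (Real.log_pos hm))
end

section
/- Let A₁, …, A_g be pairwise disjoint finite sets of real numbers and let t, r ≥ 1 be integers. For each i, call x ∈ A_i a sample if the rank of x in A_i (its 1-based position in increasing order) is a multiple of t; let S be the set of all samples (from all groups). Call y ∈ S a splitter if the rank of y in S (1-based position in increasing order of S) is a multiple of r. Then every open interval I ⊆ ℝ containing no splitter satisfies |I ∩ (A₁ ∪ ⋯ ∪ A_g)| ≤ t·(r − 1) + g·(t − 1). -/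
open scoped Classical

/-- The 1-based rank of `x` in a finite set of reals `s` (its position when `s` is
listed in increasing order), assuming `x ∈ s`. -/
noncomputable def rank (s : Finset ℝ) (x : ℝ) : ℕ :=
  (s.filter (fun y => y ≤ x)).card

/-!
The samples in an initial segment of `A i` number the size of that segment divided by `t`, rounded
down. An interval is the difference of two initial segments, so the number of elements of `A i` in
it exceeds `t` times the number of its samples by at most `t - 1`. The same fact for `S` and `r`
shows that an interval without splitters contains at most `r - 1` samples. Since the groups are
disjoint, no sample is counted twice when the bounds for the groups are added up.
-/

theorem le_mul_add_pred_of_add_div_eq {a m k n : ℕ} (hn : 0 < n)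
    (h : (m + a) / n = m / n + k) : a ≤ n * k + (n - 1) := by
  have hlt : m + a < n * (m / n + k + 1) := h ▸ Nat.lt_mul_div_succ (m + a) hn
  have hle : n * (m / n) ≤ m := Nat.mul_div_le m n
  rw [mul_add, mul_add] at hlt
  omega

section LowerClosure

open Finset

variable {α : Type*} [Preorder α]

theorem isLowerSet_lowerClosure_sdiff {I : Set α} (hI : I.OrdConnected) :
    IsLowerSet ((lowerClosure I : Set α) \ I) := by
  rintro x y hyx ⟨hx, hxI⟩
  obtain ⟨z, hz, hxz⟩ := mem_lowerClosure.1 hx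
  exact ⟨(lowerClosure I).lower hyx hx, fun hy => hxI (hI.out hy hz ⟨hyx, hxz⟩)⟩

theorem card_filter_lowerClosure (s : Finset α) (I : Set α) :
    #{x ∈ s | x ∈ (lowerClosure I : Set α)} =
      #{x ∈ s | x ∈ (lowerClosure I : Set α) \ I} + #{x ∈ s | x ∈ I} := by
  rw [← card_union_of_disjoint, ← filter_or]
  · refine congrArg card (filter_congr fun x _ => ?_)
    rw [← Set.mem_union, Set.sdiff_union_of_subset subset_lowerClosure]
  · exact disjoint_filter.2 fun x _ hx => hx.2

end LowerClosure

section SystematicSample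

open Finset Function

variable {α ι : Type*} [LinearOrder α]

/-- The 1-based rank of `x` in a finite subset `s` of a linear order, for `x ∈ s`: the counterpart
of `rank` over an arbitrary linear order. -/
def orderRank (s : Finset α) (x : α) : ℕ := #{y ∈ s | y ≤ x}

/-- The systematic sample of `s` with step `n`: the elements of `s` whose rank in `s` is a multiple
of `n`. Both the samples of a group and the splitters among the samples are of this form. -/
def systematicSample (n : ℕ) (s : Finset α) : Finset α := {x ∈ s | n ∣ orderRank s x}

theorem systematicSample_subset (n : ℕ) (s : Finset α) : systematicSample n s ⊆ s :=
  filter_subset _ _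

theorem strictMonoOn_orderRank (s : Finset α) : StrictMonoOn (orderRank s) s := by
  intro x _ y hy hxy
  refine card_lt_card (ssubset_iff_of_subset ?_ |>.2 ⟨y, ?_, ?_⟩)
  · exact monotone_filter_right s fun _ _ hz => hz.trans hxy.le
  · exact mem_filter.2 ⟨hy, le_rfl⟩
  · exact fun h => hxy.not_ge (mem_filter.1 h).2

theorem image_orderRank (s : Finset α) : s.image (orderRank s) = Ioc 0 #s := by
  refine eq_of_subset_of_card_le (image_subset_iff.2 fun x hx => mem_Ioc.2 ⟨?_, ?_⟩) ?_
  · exact card_pos.2 ⟨x, mem_filter.2 ⟨hx, le_rfl⟩⟩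
  · exact card_filter_le _ _
  · rw [card_image_of_injOn (strictMonoOn_orderRank s).injOn, Nat.card_Ioc, Nat.sub_zero]

theorem card_systematicSample (n : ℕ) (s : Finset α) : #(systematicSample n s) = #s / n := by
  have hinj : Set.InjOn (orderRank s) (systematicSample n s) :=
    (strictMonoOn_orderRank s).injOn.mono (systematicSample_subset n s)
  rw [← card_image_of_injOn hinj, systematicSample, ← filter_image, image_orderRank,
    Nat.Ioc_filter_dvd_card_eq_div]

section IsLowerSet

variable {D : Set α} [DecidablePred (· ∈ D)]

theorem orderRank_filter_of_isLowerSet (hD : IsLowerSet D) (s : Finset α) {x : α} (hx : x ∈ D) :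
    orderRank {y ∈ s | y ∈ D} x = orderRank s x := by
  rw [orderRank, orderRank, filter_filter]
  exact congrArg card (filter_congr fun y _ => and_iff_right_of_imp fun hyx => hD hyx hx)

theorem filter_systematicSample_of_isLowerSet (hD : IsLowerSet D) (n : ℕ) (s : Finset α) :
    {x ∈ systematicSample n s | x ∈ D} = systematicSample n {x ∈ s | x ∈ D} := by
  rw [systematicSample, systematicSample, filter_comm]
  refine filter_congr fun x hx => ?_
  rw [orderRank_filter_of_isLowerSet hD s (mem_filter.1 hx).2]

theorem card_filter_systematicSample_of_isLowerSet (hD : IsLowerSet D) (n : ℕ) (s : Finset α) :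
    #{x ∈ systematicSample n s | x ∈ D} = #{x ∈ s | x ∈ D} / n := by
  rw [filter_systematicSample_of_isLowerSet hD, card_systematicSample]

end IsLowerSet

theorem sum_card_filter_systematicSample [Fintype ι] {A : ι → Finset α}
    (hA : Pairwise (Disjoint on A)) (n : ℕ) (I : Set α) :
    ∑ i, #{x ∈ systematicSample n (A i) | x ∈ I} =
      #{x ∈ univ.biUnion fun i => systematicSample n (A i) | x ∈ I} := by
  rw [filter_biUnion, card_biUnion]
  intro i _ j _ hij
  exact disjoint_filter_filter
    ((hA hij).mono (systematicSample_subset n _) (systematicSample_subset n _))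

variable {I : Set α}

theorem card_filter_le_mul_card_filter_systematicSample (hI : I.OrdConnected) {n : ℕ} (hn : 0 < n)
    (s : Finset α) :
    #{x ∈ s | x ∈ I} ≤ n * #{x ∈ systematicSample n s | x ∈ I} + (n - 1) := by
  have hupTo := card_filter_systematicSample_of_isLowerSet (lowerClosure I).lower n s
  have hbelow :=
    card_filter_systematicSample_of_isLowerSet (isLowerSet_lowerClosure_sdiff hI) n s
  rw [card_filter_lowerClosure, card_filter_lowerClosure, hbelow] at hupTo
  exact le_mul_add_pred_of_add_div_eq hn hupTo.symm

theorem card_filter_le_pred_of_forall_systematicSample_notMem (hI : I.OrdConnected) {n : ℕ}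
    (hn : 0 < n) {s : Finset α} (hs : ∀ x ∈ systematicSample n s, x ∉ I) :
    #{x ∈ s | x ∈ I} ≤ n - 1 := by
  simpa only [filter_false_of_mem hs, card_empty, mul_zero, zero_add] using
    card_filter_le_mul_card_filter_systematicSample hI hn s

theorem stmt3_general [Fintype ι] {A : ι → Finset α}
    (hA : Pairwise (Disjoint on A)) {t r : ℕ} (ht : 0 < t) (hr : 0 < r) (hI : I.OrdConnected)
    (hsplit : ∀ y ∈ systematicSample r (univ.biUnion fun i => systematicSample t (A i)), y ∉ I) :
    #{x ∈ univ.biUnion A | x ∈ I} ≤ t * (r - 1) + Fintype.card ι * (t - 1) :=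
  calc #{x ∈ univ.biUnion A | x ∈ I}
    _ ≤ ∑ i, #{x ∈ A i | x ∈ I} := by
        rw [filter_biUnion]
        exact card_biUnion_le
    _ ≤ ∑ i, (t * #{x ∈ systematicSample t (A i) | x ∈ I} + (t - 1)) :=
        sum_le_sum fun i _ => card_filter_le_mul_card_filter_systematicSample hI ht (A i)
    _ = t * #{x ∈ univ.biUnion fun i => systematicSample t (A i) | x ∈ I}
          + Fintype.card ι * (t - 1) := by
        rw [sum_add_distrib, ← mul_sum, sum_card_filter_systematicSample hA, sum_const, card_univ,
          smul_eq_mul]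
    _ ≤ t * (r - 1) + Fintype.card ι * (t - 1) := by
        gcongr
        exact card_filter_le_pred_of_forall_systematicSample_notMem hI hr hsplit

end SystematicSample

/-- Deterministic splitter-sampling lemma: with samples every `t`-th element of each
group and splitters every `r`-th sample, any open interval containing no splitter
contains at most `t·(r−1) + g·(t−1)` elements of the union of the groups. -/
theorem stmt3 (g : ℕ) (A : Fin g → Finset ℝ)
    (hdisj : ∀ i j, i ≠ j → Disjoint (A i) (A j))
    (t r : ℕ) (ht : 1 ≤ t) (hr : 1 ≤ r)
    (S : Finset ℝ)
    (hS : S = Finset.univ.biUnion (fun i => (A i).filter (fun x => t ∣ rank (A i) x)))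
    (I : Set ℝ) (hIopen : IsOpen I) (hIconn : I.OrdConnected)
    (hnosplitter : ∀ y ∈ S.filter (fun y => r ∣ rank S y), y ∉ I) :
    ((Finset.univ.biUnion A).filter (fun x => x ∈ I)).card ≤ t * (r - 1) + g * (t - 1) := by
  subst hS
  simpa only [Fintype.card_fin] using stmt3_general hdisj ht hr hIconn hnosplitter
end

section
/- There is an absolute constant C such that the following holds. Let ω ≥ 1, M ≥ 2, and c > 0 be real numbers, and let D be a nonnegative real-valued function on the positive reals satisfying: D(n) ≤ c·ω for all 0 < n ≤ M, and D(n) ≤ 2·D(√(n/ω)) + c·ω·log₂ n for all n > M. Then D(n) ≤ C·c·ω·log₂(ω·n)·(1 + log₂ log₂ (ω·n)) for all n > M. -/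
/-!
In the variable `x = log₂ (ω n)` the map `n ↦ √(n / ω)` becomes `x ↦ x / 2`, and `log₂ n ≤ x`.
So `T x = D (2 ^ x / ω)` satisfies the balanced recurrence `T x ≤ 2 T (x / 2) + c ω x`: every level
of the recursion contributes at most `c ω x`, and about `log₂ x` halvings bring `x` down to the
base-case threshold `log₂ (ω M)`.
-/

open Real

theorem le_mul_one_add_logb_div_of_balanced_recurrence {T : ℝ → ℝ} {r ℓ a b : ℝ}
    (hr : 1 < r) (hℓ : 0 < ℓ) (ha : 0 ≤ a) (hb : 0 ≤ b)
    (hbase : ∀ x ∈ Set.Ioc (ℓ / r) ℓ, T x ≤ a)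
    (hrec : ∀ x, ℓ < x → T x ≤ r * T (x / r) + b * x) {x : ℝ} (hx : ℓ < x) :
    T x ≤ b * x * (1 + logb r (x / ℓ)) + r * a * (x / ℓ) := by
  have hr0 : 0 < r := one_pos.trans hr
  obtain ⟨k, hk⟩ := pow_unbounded_of_one_lt (x / ℓ) hr
  induction k generalizing x with
  | zero => exact absurd hk (by simpa only [pow_zero, not_lt] using ((one_lt_div hℓ).2 hx).le)
  | succ k ih =>
    have hx0 : 0 < x := hℓ.trans hx
    rcases le_or_gt (x / r) ℓ with hle | hlt
    · have hratio : 1 ≤ x / ℓ := ((one_lt_div hℓ).2 hx).le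
      calc T x ≤ r * T (x / r) + b * x := hrec x hx
        _ ≤ r * a + b * x := by
          gcongr
          exact hbase _ ⟨by gcongr, hle⟩
        _ ≤ r * a * (x / ℓ) + b * x * (1 + logb r (x / ℓ)) :=
          add_le_add (le_mul_of_one_le_right (by positivity) hratio)
            (le_mul_of_one_le_right (by positivity)
              (le_add_of_nonneg_right (logb_nonneg hr hratio)))
        _ = b * x * (1 + logb r (x / ℓ)) + r * a * (x / ℓ) := add_comm _ _
    · have hpow : x / r / ℓ < r ^ k := by
        rwa [div_right_comm, div_lt_iff₀ hr0, ← pow_succ]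
      have hlog : logb r (x / r / ℓ) = logb r (x / ℓ) - 1 := by
        rw [div_right_comm, logb_div (by positivity) hr0.ne', logb_self_eq_one hr]
      calc T x ≤ r * T (x / r) + b * x := hrec x hx
        _ ≤ r * (b * (x / r) * (1 + logb r (x / r / ℓ)) + r * a * (x / r / ℓ)) + b * x := by
          gcongr
          exact ih hlt hpow
        _ = b * x * (1 + logb r (x / ℓ)) + r * a * (x / ℓ) := by
          rw [hlog]
          field_simp
          ring

theorem sqrt_rpow_div_div_self {b ω : ℝ} (hb : 0 ≤ b) (hω : 0 ≤ ω) (x : ℝ) :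
    √(b ^ x / ω / ω) = b ^ (x / 2) / ω := by
  have hsqrt : √(b ^ x) = b ^ (x / 2) := by
    rw [sqrt_eq_rpow, ← rpow_mul hb, mul_one_div]
  rw [div_div, sqrt_div (rpow_nonneg hb x), sqrt_mul_self hω, hsqrt]

theorem logb_rpow_div_le {b ω : ℝ} (hb : 1 < b) (hω : 1 ≤ ω) (x : ℝ) :
    logb b (b ^ x / ω) ≤ x := by
  have hb0 : 0 < b := one_pos.trans hb
  rw [logb_div (rpow_pos_of_pos hb0 x).ne' (by positivity), logb_rpow hb0 hb.ne']
  exact sub_le_self x (logb_nonneg hb hω)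

theorem lt_rpow_div_iff_logb_mul_lt {b ω M x : ℝ} (hb : 1 < b) (hω : 0 < ω) (hM : 0 < M) :
    M < b ^ x / ω ↔ logb b (ω * M) < x := by
  rw [lt_div_iff₀' hω, logb_lt_iff_lt_rpow hb (by positivity)]

theorem one_le_logb_mul {b x y : ℝ} (hb : 1 < b) (hx : 1 ≤ x) (hy : b ≤ y) :
    1 ≤ logb b (x * y) := by
  have hb0 : 0 < b := one_pos.trans hb
  have hxy : b ≤ x * y := hy.trans (le_mul_of_one_le_left (hb0.le.trans hy) hx)
  rwa [le_logb_iff_rpow_le hb (hb0.trans_le hxy), rpow_one]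

theorem mul_one_add_two_div_add_logb_div_le {A ℓ x : ℝ} (hA : 0 ≤ A) (hℓ : 1 ≤ ℓ) (hx : 1 ≤ x) :
    A * x * (1 + 2 / ℓ + logb 2 (x / ℓ)) ≤ 3 * A * x * (1 + logb 2 x) := by
  have hdiv : 2 / ℓ ≤ 2 := div_le_self zero_le_two hℓ
  have hlog_div : logb 2 (x / ℓ) ≤ logb 2 x :=
    logb_le_logb_of_le one_lt_two (by positivity) (div_le_self (by positivity) hℓ)
  have hlog : 0 ≤ logb 2 x := logb_nonneg one_lt_two hx
  calc A * x * (1 + 2 / ℓ + logb 2 (x / ℓ)) ≤ A * x * (3 * (1 + logb 2 x)) := by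
        gcongr
        linarith
    _ = 3 * A * x * (1 + logb 2 x) := by ring

theorem stmt10_general {ω M c : ℝ} {D : ℝ → ℝ} (hω : 1 ≤ ω) (hM : 0 < M) (hωM : 1 < ω * M)
    (hc : 0 ≤ c) (hbase : ∀ n, 0 < n → n ≤ M → D n ≤ c * ω)
    (hrec : ∀ n, M < n → D n ≤ 2 * D √(n / ω) + c * ω * logb 2 n) {n : ℝ} (hn : M < n) :
    D n ≤ c * ω * logb 2 (ω * n) *
      (1 + 2 / logb 2 (ω * M) + logb 2 (logb 2 (ω * n) / logb 2 (ω * M))) := by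
  have hω0 : 0 < ω := one_pos.trans_le hω
  have hn0 : 0 < n := hM.trans hn
  have threshold (x : ℝ) : M < 2 ^ x / ω ↔ logb 2 (ω * M) < x :=
    lt_rpow_div_iff_logb_mul_lt one_lt_two hω0 hM
  have hbaseT : ∀ x ∈ Set.Ioc (logb 2 (ω * M) / 2) (logb 2 (ω * M)), D (2 ^ x / ω) ≤ c * ω :=
    fun x hx ↦ hbase _ (by positivity) (not_lt.1 ((threshold x).not.2 hx.2.not_gt))
  have hrecT (x : ℝ) (hx : logb 2 (ω * M) < x) :
      D (2 ^ x / ω) ≤ 2 * D (2 ^ (x / 2) / ω) + c * ω * x :=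
    calc D (2 ^ x / ω) ≤ 2 * D √(2 ^ x / ω / ω) + c * ω * logb 2 (2 ^ x / ω) :=
          hrec _ ((threshold x).2 hx)
      _ ≤ 2 * D (2 ^ (x / 2) / ω) + c * ω * x := by
          rw [sqrt_rpow_div_div_self zero_le_two hω0.le]
          gcongr
          exact logb_rpow_div_le one_lt_two hω x
  have hn_eq : 2 ^ logb 2 (ω * n) / ω = n := by
    rw [rpow_logb two_pos (by norm_num) (by positivity), mul_div_cancel_left₀ n hω0.ne']
  have hT := le_mul_one_add_logb_div_of_balanced_recurrence one_lt_two
    (logb_pos one_lt_two hωM) (by positivity) (by positivity) hbaseT hrecT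
    ((threshold (logb 2 (ω * n))).1 (hn_eq.symm ▸ hn))
  rw [hn_eq] at hT
  exact hT.trans_eq (by ring)

/-- The depth recurrence of the asymmetric cache-oblivious FFT:
`D(n) ≤ 2·D(√(n/ω)) + c·ω·log₂ n` with base case `D(n) ≤ c·ω` for `n ≤ M` solves to
`D(n) = O(ω·log(ωn)·log log(ωn))`. -/
theorem stmt10 : ∃ C : ℝ, ∀ (ω M c : ℝ) (D : ℝ → ℝ),
    1 ≤ ω → 2 ≤ M → 0 < c →
    (∀ n : ℝ, 0 < n → 0 ≤ D n) →
    (∀ n : ℝ, 0 < n → n ≤ M → D n ≤ c * ω) →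
    (∀ n : ℝ, M < n → D n ≤ 2 * D (Real.sqrt (n / ω)) + c * ω * Real.logb 2 n) →
    ∀ n : ℝ, M < n →
      D n ≤ C * c * ω * Real.logb 2 (ω * n) * (1 + Real.logb 2 (Real.logb 2 (ω * n))) := by
  refine ⟨3, fun ω M c D hω hM hc _ hbase hrec n hn ↦
    (stmt10_general hω (by positivity) (by nlinarith) hc.le hbase hrec hn).trans ?_⟩
  simpa only [mul_assoc] using mul_one_add_two_div_add_logb_div_le (A := c * ω) (by positivity)
    (one_le_logb_mul one_lt_two hω hM) (one_le_logb_mul one_lt_two hω (hM.trans hn.le))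
end

section
/- There is an absolute constant C such that the following holds. Let c > 0, ω ≥ 1, and M ≥ 2^{16} be real numbers, and let D be a nonnegative real-valued function on the positive reals such that: (i) D(n) ≤ c·ω for all 0 < n ≤ M, and (ii) for every n > M there exist finitely many reals n₁, …, n_j, each satisfying 0 < n_i ≤ √(n/ω)·log₂ n, with D(n) ≤ c·ω·(log₂ n)² + max_{1 ≤ i ≤ j} D(n_i). Then D(n) ≤ C·c·ω·(log₂ n)² for all n > M. -/
/-!
Passing from `n` to `√n · log₂ n` replaces `L = log₂ n` by
`L / 2 + log₂ L = (1 / 2 + log₂ L / L) · L`. The bracket is less than `1` and decreasing for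
`L > 4`, so for all `n ≥ M₀ > 16` it is at most its value at `n = M₀`. Hence the costs `c ω L²`
along any chain of subproblems decay geometrically, and their sum is at most a constant multiple of
the cost at the root.
-/

theorem le_div_one_sub_add_of_geometric_recurrence {α : Type*} {S : Set α} {D g : α → ℝ} {q δ b : ℝ}
    (hq₀ : 0 ≤ q) (hq₁ : q < 1) (hδ : 0 < δ) (hg : ∀ x ∈ S, δ ≤ g x)
    (hrec : ∀ x ∈ S, D x ≤ g x + b ∨ ∃ y ∈ S, g y ≤ q * g x ∧ D x ≤ g x + D y)
    {x : α} (hx : x ∈ S) : D x ≤ g x / (1 - q) + b := by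
  have hq : 0 < 1 - q := sub_pos.2 hq₁
  -- If `q ^ k * g x < δ`, then every chain of subproblems from `x` leaves `S` within `k` steps.
  have bound_of_depth : ∀ k : ℕ, ∀ x ∈ S, q ^ k * g x < δ → D x ≤ g x / (1 - q) + b := by
    intro k
    induction k with
    | zero =>
      intro x hx hlt
      rw [pow_zero, one_mul] at hlt
      exact absurd hlt (hg x hx).not_gt
    | succ k ih =>
      intro x hx hlt
      rcases hrec x hx with hbase | ⟨y, hy, hgy, hDy⟩
      · have hgx : g x ≤ g x / (1 - q) :=
          le_div_self (hδ.le.trans (hg x hx)) hq (sub_le_self 1 hq₀)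
        exact hbase.trans (by gcongr)
      · have hlt' : q ^ k * g y < δ :=
          calc q ^ k * g y ≤ q ^ k * (q * g x) := by gcongr
            _ = q ^ (k + 1) * g x := by ring
            _ < δ := hlt
        calc D x ≤ g x + D y := hDy
          _ ≤ g x + (g y / (1 - q) + b) := by gcongr; exact ih y hy hlt'
          _ ≤ g x + (q * g x / (1 - q) + b) := by gcongr
          _ = g x / (1 - q) + b := by field_simp; ring
  have hgx : 0 < g x := hδ.trans_le (hg x hx)
  obtain ⟨k, hk⟩ := exists_pow_lt_of_lt_one (div_pos hδ hgx) hq₁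
  exact bound_of_depth k x hx ((lt_div_iff₀ hgx).1 hk)

/-- The factor `1 / 2 + log₂ L / L` by which `L = log₂ n` is multiplied when the problem size `n`
is replaced by `√n · log₂ n`. It is a function of `L` rather than of `n`. -/
noncomputable def logShrinkFactor (L : ℝ) : ℝ :=
  1 / 2 + Real.logb 2 L / L

theorem logShrinkFactor_nonneg {L : ℝ} (hL : 1 ≤ L) : 0 ≤ logShrinkFactor L := by
  have hlog : 0 ≤ Real.logb 2 L := Real.logb_nonneg one_lt_two hL
  unfold logShrinkFactor
  positivity

theorem logShrinkFactor_lt_one {L : ℝ} (hL : 4 < L) : logShrinkFactor L < 1 := by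
  have hlog_four : Real.log 4 = 2 * Real.log 2 := by
    rw [show (4 : ℝ) = 2 ^ 2 by norm_num, Real.log_pow, Nat.cast_ofNat]
  have htangent : Real.log L - Real.log 4 ≤ L / 4 - 1 := by
    rw [← Real.log_div (by positivity) (by norm_num)]
    exact Real.log_le_sub_one_of_pos (by positivity)
  have hlog_two : 1 / 2 < Real.log 2 := by linarith [Real.log_two_gt_d9]
  have hlogb : Real.logb 2 L < 1 / 2 * L := by
    rw [Real.logb, div_lt_iff₀ (by positivity)]
    nlinarith
  have hdiv : Real.logb 2 L / L < 1 / 2 := (div_lt_iff₀ (by positivity)).2 hlogb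
  unfold logShrinkFactor
  linarith

theorem logShrinkFactor_sq_lt_one {L : ℝ} (hL : 4 < L) : logShrinkFactor L ^ 2 < 1 :=
  pow_lt_one₀ (logShrinkFactor_nonneg (by linarith)) (logShrinkFactor_lt_one hL) two_ne_zero

theorem logShrinkFactor_antitoneOn : AntitoneOn logShrinkFactor (Set.Ici (Real.exp 1)) := by
  intro x hx y hy hxy
  have hlog : Real.log y / y ≤ Real.log x / x := Real.log_div_self_antitoneOn hx hy hxy
  simp only [logShrinkFactor, Real.logb, div_right_comm _ (Real.log 2)]
  gcongr

theorem logb_two_sqrt_mul_logb_two {n : ℝ} (hn : 1 < n) :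
    Real.logb 2 (√n * Real.logb 2 n) = logShrinkFactor (Real.logb 2 n) * Real.logb 2 n := by
  have hL : 0 < Real.logb 2 n := Real.logb_pos one_lt_two hn
  have hsqrt : Real.logb 2 √n = Real.logb 2 n / 2 := by
    rw [Real.logb, Real.logb, Real.log_sqrt (by positivity), div_right_comm]
  rw [Real.logb_mul (by positivity) hL.ne', hsqrt, logShrinkFactor]
  field_simp

theorem logb_two_le_logShrinkFactor_mul {L₀ ω m n : ℝ} (hL₀ : Real.exp 1 ≤ L₀) (hω : 1 ≤ ω)
    (hn : 1 < n) (hL : L₀ ≤ Real.logb 2 n) (hm : 0 < m)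
    (hmn : m ≤ √(n / ω) * Real.logb 2 n) :
    Real.logb 2 m ≤ logShrinkFactor L₀ * Real.logb 2 n := by
  have hlog : 0 < Real.logb 2 n := Real.logb_pos one_lt_two hn
  calc Real.logb 2 m ≤ Real.logb 2 (√n * Real.logb 2 n) := by
        refine Real.logb_le_logb_of_le one_lt_two hm (hmn.trans ?_)
        gcongr
        exact div_le_self (by positivity) hω
    _ = logShrinkFactor (Real.logb 2 n) * Real.logb 2 n := logb_two_sqrt_mul_logb_two hn
    _ ≤ logShrinkFactor L₀ * Real.logb 2 n := by
        gcongr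
        exact logShrinkFactor_antitoneOn hL₀ (hL₀.trans hL) hL

theorem four_lt_logb_two {n : ℝ} (hn : 16 < n) : 4 < Real.logb 2 n := by
  rw [Real.lt_logb_iff_rpow_lt one_lt_two (by positivity)]
  norm_num [hn]

theorem le_mul_logb_two_sq {a n : ℝ} (ha : 0 ≤ a) (hn : 2 ≤ n) : a ≤ a * Real.logb 2 n ^ 2 := by
  have hlog : 1 ≤ Real.logb 2 n := by
    rwa [Real.le_logb_iff_rpow_le one_lt_two (by positivity), Real.rpow_one]
  exact le_mul_of_one_le_right ha (one_le_pow₀ hlog)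

theorem le_add_or_exists_subproblem_of_le_add_iSup {a b ω M n : ℝ} {D : ℝ → ℝ} {ι : Type*}
    [Finite ι] [Nonempty ι] {ns : ι → ℝ} (ha : 0 ≤ a) (hω : 1 ≤ ω) (hM : 16 < M) (hn : M < n)
    (hbase : ∀ m : ℝ, 0 < m → m ≤ M → D m ≤ b)
    (hns : ∀ i, 0 < ns i ∧ ns i ≤ √(n / ω) * Real.logb 2 n)
    (hD : D n ≤ a * Real.logb 2 n ^ 2 + ⨆ i, D (ns i)) :
    D n ≤ a * Real.logb 2 n ^ 2 + b ∨
      ∃ m ∈ Set.Ioi M,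
        a * Real.logb 2 m ^ 2
            ≤ logShrinkFactor (Real.logb 2 M) ^ 2 * (a * Real.logb 2 n ^ 2) ∧
          D n ≤ a * Real.logb 2 n ^ 2 + D m := by
  obtain ⟨i, hi⟩ := exists_eq_ciSup_of_finite (f := fun i ↦ D (ns i))
  obtain ⟨hpos, hle⟩ := hns i
  rw [← hi] at hD
  rcases le_or_gt (ns i) M with hsmall | hlarge
  · exact .inl (hD.trans (by gcongr; exact hbase _ hpos hsmall))
  · refine .inr ⟨ns i, hlarge, ?_, hD⟩
    have hexp : Real.exp 1 ≤ Real.logb 2 M := by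
      linarith [Real.exp_one_lt_three, four_lt_logb_two hM]
    have hlogM : Real.logb 2 M ≤ Real.logb 2 n :=
      Real.logb_le_logb_of_le one_lt_two (by positivity) hn.le
    have hlog_nonneg : 0 ≤ Real.logb 2 (ns i) :=
      Real.logb_nonneg one_lt_two (by linarith)
    calc a * Real.logb 2 (ns i) ^ 2
      _ ≤ a * (logShrinkFactor (Real.logb 2 M) * Real.logb 2 n) ^ 2 := by
          gcongr
          exact logb_two_le_logShrinkFactor_mul hexp hω (by linarith) hlogM hpos hle
      _ = logShrinkFactor (Real.logb 2 M) ^ 2 * (a * Real.logb 2 n ^ 2) := by ring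

theorem le_div_one_sub_logShrinkFactor_sq_add {a b ω M : ℝ} {D : ℝ → ℝ} (ha : 0 < a)
    (hω : 1 ≤ ω) (hM : 16 < M) (hbase : ∀ n : ℝ, 0 < n → n ≤ M → D n ≤ b)
    (hrec : ∀ n : ℝ, M < n → ∃ (j : ℕ) (ns : Fin j → ℝ), 1 ≤ j ∧
      (∀ i, 0 < ns i ∧ ns i ≤ √(n / ω) * Real.logb 2 n) ∧
      D n ≤ a * Real.logb 2 n ^ 2 + ⨆ i, D (ns i))
    {n : ℝ} (hn : M < n) :
    D n ≤ a * Real.logb 2 n ^ 2 / (1 - logShrinkFactor (Real.logb 2 M) ^ 2) + b := by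
  have hcost : ∀ x ∈ Set.Ioi M, a ≤ a * Real.logb 2 x ^ 2 := fun x hx ↦
    le_mul_logb_two_sq ha.le (by linarith [Set.mem_Ioi.1 hx])
  refine le_div_one_sub_add_of_geometric_recurrence (S := Set.Ioi M)
    (g := fun x ↦ a * Real.logb 2 x ^ 2) (sq_nonneg _)
    (logShrinkFactor_sq_lt_one (four_lt_logb_two hM)) ha hcost (fun x hx ↦ ?_) hn
  obtain ⟨j, ns, hj, hns, hD⟩ := hrec x hx
  have : Nonempty (Fin j) := ⟨⟨0, hj⟩⟩
  exact le_add_or_exists_subproblem_of_le_add_iSup ha.le hω hM hx hbase hns hD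

-- `16` is the largest fixed point of `n ↦ √n · log₂ n`: with threshold `16` itself, a chain of
-- subproblems can converge to `16` without ever reaching it.
theorem stmt11_general {M₀ : ℝ} (hM₀ : 16 < M₀) : ∃ C : ℝ, ∀ (c ω M : ℝ) (D : ℝ → ℝ),
    0 < c → 1 ≤ ω → M₀ ≤ M →
    (∀ n : ℝ, 0 < n → n ≤ M → D n ≤ c * ω) →
    (∀ n : ℝ, M < n → ∃ (j : ℕ) (ns : Fin j → ℝ), 1 ≤ j ∧
      (∀ i, 0 < ns i ∧ ns i ≤ √(n / ω) * Real.logb 2 n) ∧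
      D n ≤ c * ω * (Real.logb 2 n) ^ 2 + ⨆ i, D (ns i)) →
    ∀ n : ℝ, M < n → D n ≤ C * c * ω * (Real.logb 2 n) ^ 2 := by
  set r := logShrinkFactor (Real.logb 2 M₀)
  have hlogM₀ : 4 < Real.logb 2 M₀ := four_lt_logb_two hM₀
  have hr : 0 < 1 - r ^ 2 := sub_pos.2 (logShrinkFactor_sq_lt_one hlogM₀)
  refine ⟨1 / (1 - r ^ 2) + 1, fun c ω M D hc hω hM hbase hrec n hn ↦ ?_⟩
  have hlogM : Real.logb 2 M₀ ≤ Real.logb 2 M :=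
    Real.logb_le_logb_of_le one_lt_two (by positivity) hM
  have hshrink_nonneg : 0 ≤ logShrinkFactor (Real.logb 2 M) :=
    logShrinkFactor_nonneg (by linarith)
  have hexp : Real.exp 1 ≤ Real.logb 2 M₀ := by linarith [Real.exp_one_lt_three]
  have hshrink : logShrinkFactor (Real.logb 2 M) ≤ r :=
    logShrinkFactor_antitoneOn hexp (hexp.trans hlogM) hlogM
  have hcω : 0 < c * ω := by positivity
  have hcost : c * ω ≤ c * ω * Real.logb 2 n ^ 2 :=
    le_mul_logb_two_sq hcω.le (by linarith)
  calc D n ≤ c * ω * Real.logb 2 n ^ 2 / (1 - logShrinkFactor (Real.logb 2 M) ^ 2) + c * ω :=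
        le_div_one_sub_logShrinkFactor_sq_add hcω hω (hM₀.trans_le hM) hbase hrec hn
    _ ≤ c * ω * Real.logb 2 n ^ 2 / (1 - r ^ 2) + c * ω * Real.logb 2 n ^ 2 := by
        refine add_le_add ?_ hcost
        gcongr
    _ = (1 / (1 - r ^ 2) + 1) * c * ω * Real.logb 2 n ^ 2 := by ring

/-- The depth recurrence of the low-depth asymmetric cache-oblivious sort:
`D(n) ≤ c·ω·(log₂ n)² + max_i D(nᵢ)` with sub-bucket sizes `nᵢ ≤ √(n/ω)·log₂ n`
and base case `D(n) ≤ c·ω` for `n ≤ M` solves to `D(n) = O(ω·(log₂ n)²)`. -/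
theorem stmt11 : ∃ C : ℝ, ∀ (c ω M : ℝ) (D : ℝ → ℝ),
    0 < c → 1 ≤ ω → (2:ℝ) ^ 16 ≤ M →
    (∀ n : ℝ, 0 < n → 0 ≤ D n) →
    (∀ n : ℝ, 0 < n → n ≤ M → D n ≤ c * ω) →
    (∀ n : ℝ, M < n → ∃ (j : ℕ) (ns : Fin j → ℝ), 1 ≤ j ∧
      (∀ i, 0 < ns i ∧ ns i ≤ Real.sqrt (n / ω) * Real.logb 2 n) ∧
      D n ≤ c * ω * (Real.logb 2 n) ^ 2 + ⨆ i, D (ns i)) →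
    ∀ n : ℝ, M < n → D n ≤ C * c * ω * (Real.logb 2 n) ^ 2 := by
  obtain ⟨C, hC⟩ := stmt11_general (M₀ := 2 ^ 16) (by norm_num)
  exact ⟨C, fun c ω M D hc hω hM _ ↦ hC c ω M D hc hω hM⟩
end

section
/- Let A be a set of N ≥ 1 distinct real numbers, let ω ≥ 2 and q ≥ 1 be integers, and let s = ω·q. Let Y₁, …, Y_s be independent samples drawn uniformly at random from A (with replacement). Sort the samples (with multiplicity) and let p_j be the sample in sorted position j·q, for j = 1, …, ω − 1 (the pivots). Define ω buckets: B₀ = {a ∈ A : a < p₁}, B_j = {a ∈ A : p_j < a < p_{j+1}} for 1 ≤ j ≤ ω − 2, and B_{ω−1} = {a ∈ A : a > p_{ω−1}}. Then the probability that some bucket contains more than 4·N/ω elements of A is at most N·exp(−q/2). -/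
open scoped Classical

/-- Given `s` samples `f : Fin s → A` drawn from the finite set `A` of reals, `pivot`
returns the sample (with multiplicity) in sorted position `j·q` (1-based). -/
noncomputable def pivot (A : Finset ℝ) (s q : ℕ) (f : Fin s → {x // x ∈ A}) (j : ℕ) : ℝ :=
  ((Multiset.map (fun i => (f i : ℝ)) (Finset.univ : Finset (Fin s)).val).sort (· ≤ ·)).getD
    (j * q - 1) 0

/-- The `j`-th bucket (for `0 ≤ j ≤ ω − 1`) determined by the pivots
`p_1 < ⋯ < p_{ω−1}`: `B₀ = {a < p₁}`, `B_j = {p_j < a < p_{j+1}}` for `1 ≤ j ≤ ω−2`,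
and `B_{ω−1} = {a > p_{ω−1}}`. -/
noncomputable def bucket (A : Finset ℝ) (s q ω : ℕ) (f : Fin s → {x // x ∈ A}) (j : ℕ) :
    Finset ℝ :=
  A.filter (fun a =>
    (j = 0 ∨ pivot A s q f j < a) ∧ (j = ω - 1 ∨ a < pivot A s q f (j + 1)))

/-!
A bucket is an order-convex part of `A`, and it receives at most `q` samples, since these lie
between two consecutive pivots. On the other hand, an order-convex set with more than `4N/ω`
elements expects at least `4q` of the `ωq` samples, so by Chernoff's bound it receives at most `q`
of them with probability at most `exp (-q/2)`. The union bound only has to run over the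
inclusion-minimal large convex sets: two of these with the same least element are nested, hence
equal, so there are at most `N` of them.

The probability of an event for independent uniform samples from `α` indexed by `ι` is expressed by
counting the functions `ι → α` that satisfy it, against the total `|α| ^ |ι|`.
-/

section Chernoff

open Finset

variable {ι α : Type*} [Fintype ι]

/-- The number of samples, among the samples `f i` indexed by `ι`, that land in `S`. -/
noncomputable def hitCount (f : ι → α) (S : Finset α) : ℕ := #{i | f i ∈ S}

lemma hitCount_mono (f : ι → α) {S T : Finset α} (h : S ⊆ T) : hitCount f S ≤ hitCount f T :=
  card_le_card (monotone_filter_right _ fun _ _ hi ↦ h hi)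

lemma exp_neg_le_one_sub_add_sq_div_two {t : ℝ} (ht : 0 ≤ t) :
    Real.exp (-t) ≤ 1 - t + t ^ 2 / 2 := by
  rw [Real.exp_neg]
  refine inv_le_of_inv_le₀ (by nlinarith [sq_nonneg (t - 1)]) ?_
  refine le_trans ?_ (Real.quadratic_le_exp_of_nonneg ht)
  -- `(1 - t + t²/2) * (1 + t + t²/2) = 1 + t⁴/4`
  rw [inv_le_iff_one_le_mul₀ (by nlinarith [sq_nonneg (t - 1)])]
  nlinarith [sq_nonneg (t ^ 2)]

variable [DecidableEq ι] [Fintype α]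

lemma sum_exp_neg_mul_hitCount (S : Finset α) (t : ℝ) :
    ∑ f : ι → α, Real.exp (-(t * hitCount f S)) =
      (Fintype.card α * (1 - (1 - Real.exp (-t)) * S.dens)) ^ Fintype.card ι := by
  have prod_weight (f : ι → α) : Real.exp (-(t * hitCount f S)) =
      ∏ i, if f i ∈ S then Real.exp (-t) else 1 := by
    rw [prod_ite, prod_const, prod_const_one, mul_one, ← Real.exp_nat_mul, hitCount]
    ring_nf
  have sum_weight : ∑ a : α, (if a ∈ S then Real.exp (-t) else 1) =
      Fintype.card α * (1 - (1 - Real.exp (-t)) * S.dens) := by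
    have hS : (Fintype.card α : ℝ) * S.dens = #S := natCast_card_mul_nnratCast_dens S
    have hite (a : α) : (if a ∈ S then Real.exp (-t) else 1) =
        1 - if a ∈ S then 1 - Real.exp (-t) else 0 := by split_ifs <;> ring
    simp only [hite, sum_sub_distrib, sum_ite_mem, univ_inter, sum_const, card_univ, nsmul_eq_mul]
    linear_combination (1 - Real.exp (-t)) * hS
  simp_rw [prod_weight]
  rw [← sum_weight, ← Fintype.prod_sum fun (_ : ι) (a : α) ↦ if a ∈ S then Real.exp (-t) else 1,
    prod_const, card_univ]

lemma sum_exp_neg_mul_hitCount_le (S : Finset α) (t : ℝ) :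
    ∑ f : ι → α, Real.exp (-(t * hitCount f S)) ≤
      Fintype.card α ^ Fintype.card ι *
        Real.exp (-((1 - Real.exp (-t)) * (Fintype.card ι * S.dens))) := by
  have hbase : 0 ≤ 1 - (1 - Real.exp (-t)) * S.dens := by
    have : (S.dens : ℝ) ≤ 1 := mod_cast S.dens_le_one
    nlinarith [Real.exp_pos (-t), (S.dens : ℚ≥0).cast_nonneg (α := ℝ)]
  rw [sum_exp_neg_mul_hitCount, mul_pow]
  gcongr
  calc _ ≤ Real.exp (-((1 - Real.exp (-t)) * S.dens)) ^ Fintype.card ι := by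
        gcongr; exact Real.one_sub_le_exp_neg _
    _ = _ := by rw [← Real.exp_nat_mul]; ring_nf

lemma card_hitCount_le_le_exp_mul_sum (S : Finset α) {t : ℝ} (ht : 0 ≤ t) (r : ℝ) :
    (#{f : ι → α | hitCount f S ≤ r} : ℝ) ≤
      Real.exp (t * r) * ∑ f : ι → α, Real.exp (-(t * hitCount f S)) := by
  rw [card_filter, Nat.cast_sum, mul_sum]
  gcongr with f
  rw [← Real.exp_add]
  split_ifs with h
  · rw [Nat.cast_one, Real.one_le_exp_iff]
    linarith [mul_le_mul_of_nonneg_left h ht]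
  · rw [Nat.cast_zero]
    positivity

theorem card_hitCount_le_one_sub_mul_mean_le (S : Finset α) {δ : ℝ} (hδ : 0 ≤ δ) :
    (#{f : ι → α | hitCount f S ≤ (1 - δ) * (Fintype.card ι * S.dens)} : ℝ) ≤
      Fintype.card α ^ Fintype.card ι *
        Real.exp (-(δ ^ 2 / 2 * (Fintype.card ι * S.dens))) := by
  set μ : ℝ := Fintype.card ι * S.dens
  have hμ0 : 0 ≤ μ := by positivity
  -- `t = δ` minimises the exponent `t(1 - δ)μ - (t - t²/2)μ`.
  calc _ ≤ Real.exp (δ * ((1 - δ) * μ)) * ∑ f : ι → α, Real.exp (-(δ * hitCount f S)) :=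
        card_hitCount_le_le_exp_mul_sum S hδ _
    _ ≤ Real.exp (δ * ((1 - δ) * μ)) *
          (Fintype.card α ^ Fintype.card ι * Real.exp (-((1 - Real.exp (-δ)) * μ))) := by
        gcongr; exact sum_exp_neg_mul_hitCount_le S δ
    _ = Fintype.card α ^ Fintype.card ι *
          Real.exp (δ * ((1 - δ) * μ) - (1 - Real.exp (-δ)) * μ) := by
        rw [sub_eq_add_neg (δ * _), Real.exp_add]; ring
    _ ≤ _ := by
        gcongr
        linear_combination μ * exp_neg_le_one_sub_add_sq_div_two hδ

lemma card_hitCount_le_le_of_four_mul_le (S : Finset α) {q : ℕ}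
    (h : 4 * (q : ℝ) ≤ Fintype.card ι * S.dens) :
    (#{f : ι → α | hitCount f S ≤ q} : ℝ) ≤
      Fintype.card α ^ Fintype.card ι * Real.exp (-(q : ℝ) / 2) := by
  calc (#{f : ι → α | hitCount f S ≤ q} : ℝ)
    _ ≤ #{f : ι → α | hitCount f S ≤ (1 - 3 / 4) * (Fintype.card ι * S.dens : ℝ)} := by
        gcongr with f
        intro hf
        have : (hitCount f S : ℝ) ≤ q := mod_cast hf
        linarith
    _ ≤ Fintype.card α ^ Fintype.card ι *
          Real.exp (-((3 / 4) ^ 2 / 2 * (Fintype.card ι * S.dens))) :=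
        card_hitCount_le_one_sub_mul_mean_le S (by norm_num)
    _ ≤ _ := by
        gcongr
        linarith [q.cast_nonneg (α := ℝ)]

end Chernoff

section Windows

open Finset

variable {α : Type*} [LinearOrder α]

lemma subset_or_subset_of_ordConnected_of_isLeast {S T : Set α} (hS : S.OrdConnected)
    (hT : T.OrdConnected) {a : α} (haS : IsLeast S a) (haT : IsLeast T a) : S ⊆ T ∨ T ⊆ S := by
  by_contra! h
  obtain ⟨⟨x, hxS, hxT⟩, y, hyT, hyS⟩ := h.imp Set.not_subset.1 Set.not_subset.1
  obtain hxy | hyx := le_total x y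
  · exact hxT (hT.out haT.1 hyT ⟨haS.2 hxS, hxy⟩)
  · exact hyS (hS.out haS.1 hxS ⟨haT.2 hyT, hyx⟩)

theorem exists_card_le_forall_ordConnected_exists_subset [Fintype α] {P : Finset α → Prop}
    (hP : ∀ S, P S → S.Nonempty) :
    ∃ W : Finset (Finset α), #W ≤ Fintype.card α ∧ (∀ S ∈ W, P S) ∧
      ∀ B : Finset α, (B : Set α).OrdConnected → P B → ∃ S ∈ W, S ⊆ B := by
  let Q (S : Finset α) : Prop := (S : Set α).OrdConnected ∧ P S
  refine ⟨univ.filter (Minimal Q), ?_, fun S hS ↦ (mem_filter.1 hS).2.prop.2, fun B hB hPB ↦ ?_⟩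
  · rw [← card_univ]
    refine card_le_card_of_forall_subsingleton (fun (S : Finset α) a ↦ IsLeast (S : Set α) a) ?_ ?_
    · intro S hS
      exact ⟨_, mem_univ _, S.isLeast_min' (hP S (mem_filter.1 hS).2.prop.2)⟩
    · rintro a - S ⟨hS, haS⟩ T ⟨hT, haT⟩
      replace hS := (mem_filter.1 hS).2
      replace hT := (mem_filter.1 hT).2
      obtain h | h := subset_or_subset_of_ordConnected_of_isLeast hS.prop.1 hT.prop.1 haS haT
      · exact hT.eq_of_ge hS.prop h |>.symm
      · exact hS.eq_of_ge hT.prop h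
  · obtain ⟨S, hSB, hS⟩ := exists_minimal_le_of_wellFoundedLT Q B ⟨hB, hPB⟩
    exact ⟨S, mem_filter.2 ⟨mem_univ _, hS⟩, hSB⟩

theorem card_exists_ordConnected_hitCount_le_le [Fintype α] {ι : Type*} [Fintype ι]
    [DecidableEq ι] {q : ℕ} (hq : 0 < q) :
    (#{f : ι → α | ∃ B : Finset α, (B : Set α).OrdConnected ∧
        4 * (q : ℝ) ≤ Fintype.card ι * B.dens ∧ hitCount f B ≤ q} : ℝ) ≤
      Fintype.card α ^ Fintype.card ι * (Fintype.card α * Real.exp (-(q : ℝ) / 2)) := by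
  let P (S : Finset α) : Prop := 4 * (q : ℝ) ≤ Fintype.card ι * S.dens
  have hP (S : Finset α) (hS : P S) : S.Nonempty := by
    rw [nonempty_iff_ne_empty]
    rintro rfl
    have : (0 : ℝ) < q := mod_cast hq
    simp only [P, dens_empty, NNRat.cast_zero, mul_zero] at hS
    linarith
  obtain ⟨W, hWcard, hWP, hW⟩ := exists_card_le_forall_ordConnected_exists_subset hP
  have hsub : ({f : ι → α | ∃ B : Finset α, (B : Set α).OrdConnected ∧ P B ∧ hitCount f B ≤ q}
      : Finset (ι → α)) ⊆ W.biUnion fun S ↦ {f | hitCount f S ≤ q} := by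
    intro f hf
    obtain ⟨B, hB, hPB, hhits⟩ := (mem_filter.1 hf).2
    obtain ⟨S, hSW, hSB⟩ := hW B hB hPB
    exact mem_biUnion.2
      ⟨S, hSW, mem_filter.2 ⟨mem_univ f, (hitCount_mono f hSB).trans hhits⟩⟩
  calc _ ≤ (#(W.biUnion fun S ↦ {f : ι → α | hitCount f S ≤ q}) : ℝ) :=
        Nat.cast_le.2 (card_le_card hsub)
    _ ≤ ∑ S ∈ W, (#{f : ι → α | hitCount f S ≤ q} : ℝ) := mod_cast card_biUnion_le
    _ ≤ ∑ _ ∈ W, Fintype.card α ^ Fintype.card ι * Real.exp (-(q : ℝ) / 2) :=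
        sum_le_sum fun S hS ↦ card_hitCount_le_le_of_four_mul_le S (hWP S hS)
    _ = #W * (Fintype.card α ^ Fintype.card ι * Real.exp (-(q : ℝ) / 2)) := by
        rw [sum_const, nsmul_eq_mul]
    _ ≤ Fintype.card α * (Fintype.card α ^ Fintype.card ι * Real.exp (-(q : ℝ) / 2)) := by
        gcongr
    _ = _ := by ring

end Windows

section Bucket

open Finset

lemma countP_le_sub_of_forall_getElem {α : Type*} {l : List α} {p : α → Bool} {m n : ℕ}
    (h : ∀ (i : ℕ) (hi : i < l.length), p l[i] → m ≤ i ∧ i < n) : l.countP p ≤ n - m := by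
  have htake : (l.take m).countP p = 0 := by
    rw [List.countP_eq_zero]
    grind [List.mem_take_iff_getElem]
  have hdrop : ((l.drop m).drop (n - m)).countP p = 0 := by
    rw [List.countP_eq_zero]
    grind [List.mem_drop_iff_getElem]
  calc l.countP p = ((l.drop m).take (n - m)).countP p := by
        rw [← l.take_append_drop m, List.countP_append, htake,
          ← (l.drop m).take_append_drop (n - m), List.countP_append, hdrop]
        simp
    _ ≤ n - m := List.countP_le_length.trans (List.length_take_le _ _)

variable {A : Finset ℝ} {s q ω j : ℕ}

/-- The values of the samples `f` in increasing order, with multiplicity; `pivot` reads off its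
entries. -/
noncomputable def sortedSamples (f : Fin s → {x // x ∈ A}) : List ℝ :=
  (Multiset.map (fun i ↦ (f i : ℝ)) univ.val).sort (· ≤ ·)

lemma length_sortedSamples (f : Fin s → {x // x ∈ A}) : (sortedSamples f).length = s := by
  simp [sortedSamples]

lemma sortedLE_sortedSamples (f : Fin s → {x // x ∈ A}) : (sortedSamples f).SortedLE :=
  (Multiset.pairwise_sort _ _).sortedLE

lemma countP_sortedSamples (f : Fin s → {x // x ∈ A}) (B : Finset ℝ) :
    (sortedSamples f).countP (· ∈ B) = hitCount f (B.subtype (· ∈ A)) := by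
  simp only [sortedSamples, ← Multiset.coe_countP, Multiset.sort_eq, Multiset.countP_map,
    hitCount, mem_subtype]
  rfl

lemma pivot_eq_getElem (f : Fin s → {x // x ∈ A}) (h : j * q - 1 < (sortedSamples f).length) :
    pivot A s q f j = (sortedSamples f)[j * q - 1] :=
  List.getD_eq_getElem _ _ h

lemma le_and_lt_of_getElem_mem_bucket (f : Fin (ω * q) → {x // x ∈ A}) (hj : j < ω) {i : ℕ}
    (hi : i < (sortedSamples f).length)
    (hmem : (sortedSamples f)[i] ∈ bucket A (ω * q) q ω f j) : j * q ≤ i ∧ i < (j + 1) * q := by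
  have hlen := length_sortedSamples f
  have hsorted := sortedLE_sortedSamples f
  have hjq : (j + 1) * q ≤ ω * q := by gcongr; omega
  have hjq' : j * q ≤ (j + 1) * q := by gcongr; omega
  obtain ⟨-, hlow, hupp⟩ := mem_filter.1 hmem
  constructor
  · obtain rfl | hlow := hlow
    · simp
    · by_contra! hlt
      rw [pivot_eq_getElem f (by omega)] at hlow
      exact hlow.not_ge (hsorted.getElem_le_getElem_of_le (by omega))
  · obtain hlast | hupp := hupp
    · rwa [show j + 1 = ω by omega, ← hlen]
    · by_contra! hge
      rw [pivot_eq_getElem f (by omega)] at hupp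
      exact hupp.not_ge (hsorted.getElem_le_getElem_of_le (by omega))

lemma hitCount_subtype_bucket_le (f : Fin (ω * q) → {x // x ∈ A}) (hj : j < ω) :
    hitCount f ((bucket A (ω * q) q ω f j).subtype (· ∈ A)) ≤ q := by
  calc hitCount f ((bucket A (ω * q) q ω f j).subtype (· ∈ A))
      = (sortedSamples f).countP (· ∈ bucket A (ω * q) q ω f j) :=
        (countP_sortedSamples f _).symm
    _ ≤ (j + 1) * q - j * q := countP_le_sub_of_forall_getElem fun i hi hmem ↦
        le_and_lt_of_getElem_mem_bucket f hj hi (of_decide_eq_true hmem)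
    _ = q := by rw [add_one_mul, Nat.add_sub_cancel_left]

lemma card_subtype_bucket (f : Fin s → {x // x ∈ A}) :
    #((bucket A s q ω f j).subtype (· ∈ A)) = #(bucket A s q ω f j) := by
  rw [card_subtype, filter_true_of_mem]
  exact fun x hx ↦ (mem_filter.1 hx).1

lemma ordConnected_subtype_bucket (f : Fin s → {x // x ∈ A}) :
    ((bucket A s q ω f j).subtype (· ∈ A) : Set {x // x ∈ A}).OrdConnected := by
  refine ⟨fun a ha b hb x hx ↦ ?_⟩
  simp only [mem_coe, mem_subtype, bucket, mem_filter] at ha hb ⊢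
  exact ⟨x.2, ha.2.1.imp_right fun h ↦ h.trans_le (Subtype.coe_le_coe.2 hx.1),
    hb.2.2.imp_right fun h ↦ (Subtype.coe_le_coe.2 hx.2).trans_lt h⟩

end Bucket

/-- Chernoff-bound claim for sample sort: drawing `s = ω·q` independent uniform samples
(with replacement) from a set `A` of `N` distinct reals and taking every `q`-th sorted
sample as a pivot, the probability that some of the resulting `ω` buckets contains more
than `4N/ω` elements of `A` is at most `N·exp(−q/2)`. -/
theorem stmt17 (A : Finset ℝ) (N : ℕ) (hN : A.card = N) (hN1 : 1 ≤ N)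
    (ω q : ℕ) (hω : 2 ≤ ω) (hq : 1 ≤ q) (s : ℕ) (hs : s = ω * q) :
    (((Finset.univ : Finset (Fin s → {x // x ∈ A})).filter
        (fun f => ∃ j < ω, (4 * (N : ℝ) / (ω : ℝ)) <
          ((bucket A s q ω f j).card : ℝ))).card : ℝ) / (N : ℝ) ^ s ≤
      (N : ℝ) * Real.exp (-(q : ℝ) / 2) := by
  subst hs hN
  have hA : (0 : ℝ) < A.card := mod_cast hN1
  have hchernoff :=
    card_exists_ordConnected_hitCount_le_le (α := {x // x ∈ A}) (ι := Fin (ω * q)) hq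
  simp only [Fintype.card_coe, Fintype.card_fin] at hchernoff
  rw [div_le_iff₀' (by positivity)]
  refine (Nat.cast_le.2 (Finset.card_le_card ?_)).trans hchernoff
  refine Finset.monotone_filter_right _ ?_
  rintro f - ⟨j, hj, hlarge⟩
  refine ⟨(bucket A (ω * q) q ω f j).subtype (· ∈ A), ordConnected_subtype_bucket f, ?_,
    hitCount_subtype_bucket_le f hj⟩
  rw [Finset.nnratCast_dens, card_subtype_bucket, Fintype.card_coe, ← mul_div_assoc,
    le_div_iff₀ hA]
  rw [div_lt_iff₀ (by positivity)] at hlarge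
  push_cast
  linear_combination (q : ℝ) * hlarge
end
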